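/- Fix α = 0.981 and integers w_1,…,w_d with 1 ≤ w_j ≤ 3 for every j. For every t ∈ (0,1/2]^d: if d = 4 then κ_4^{(w_1,…,w_4)}(t) < 1; if d = 3 then κ_3^{(w_1,w_2,w_3)}(t) < 0.85; if d = 2 then κ_2^{(w_1,w_2)}(t) < 0.67; and if d = 1 then κ_1^{(w_1)}(t_1) < 0.42. -/

import Mathlib

open Finset

/-- `α^{-⌈log_4 (w+1)⌉}` with `α = 0.981`; for `w ≥ 1`, `⌈log_4 (w+1)⌉ = Nat.clog 4 (w+1)`. -/
noncomputable def amort (w : ℕ) : ℝ := (0.981 : ℝ) ^ (-(Nat.clog 4 (w + 1) : ℤ))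

/-- `T(t,w) = (t/2^{w−1})/(1 − t/2^{w−1}) · ((1−t)/√t + (w−1)/√2)`. -/
noncomputable def Tfun (t : ℝ) (w : ℕ) : ℝ :=
  (t / 2 ^ (w - 1)) / (1 - t / 2 ^ (w - 1)) * ((1 - t) / Real.sqrt t + ((w : ℝ) - 1) / Real.sqrt 2)

/-- `g(h) = √(h/(1+h))`. -/
noncomputable def gfun (h : ℝ) : ℝ := Real.sqrt (h / (1 + h))

/-- The single-layer decay rate
`κ_d^{(w_1,…,w_d)}(t) = g(∏_j ĥ(t_j,w_j)) · Σ_a T(t_a,w_a) · α^{−⌈log_4(w_a+1)⌉}`. -/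
noncomputable def kap (d : ℕ) (w : Fin d → ℕ) (t : Fin d → ℝ) : ℝ :=
  gfun (∏ j, (1 - t j / 2 ^ (w j - 1))) * ∑ a, Tfun (t a) (w a) * amort (w a)

/-!
Put `x = t / 2 ^ (w - 1)`, so that `ĥ(t, w) = 1 - x = ĥ(x, 1)` and `T(x, 1) = √x`. The weighted term
`T(t, w) · α ^ (-⌈log₄ (w + 1)⌉)` is at most `T(x, 1) · α⁻¹`, so every `w_j` may be taken to be `1`.
Then AM-GM for `∏ (1 - x_j)` and Cauchy-Schwarz for `∑ √x_j` allow all `x_j` to be replaced by their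
mean `v`. With `p = 1 - v` and `K = (α B)²`, the bound `κ < B` becomes
`d² (1 - p) p ^ d < K (1 + p ^ d)`. For `d = 2, 3, 4` it holds even where left minus right side
is largest, at its critical point in `p`; for `d = 1` that point is excluded by `p ≥ 1 / 2`.
-/

section Means

variable {ι : Type*} {x : ι → ℝ}

lemma prod_le_mean_pow_card (s : Finset ι) (hx : ∀ i ∈ s, 0 ≤ x i) :
    ∏ i ∈ s, x i ≤ ((∑ i ∈ s, x i) / #s) ^ #s := by
  rcases s.eq_empty_or_nonempty with rfl | hs
  · simp
  have hprod : 0 ≤ ∏ i ∈ s, x i := prod_nonneg hx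
  have amgm : (∏ i ∈ s, x i) ^ (#s : ℝ)⁻¹ ≤ (∑ i ∈ s, x i) / #s := by
    simpa using Real.geom_mean_le_arith_mean s (fun _ => 1) x (fun _ _ => zero_le_one)
      (by simpa using hs) hx
  calc ∏ i ∈ s, x i = ((∏ i ∈ s, x i) ^ (#s : ℝ)⁻¹) ^ #s :=
        (Real.rpow_inv_natCast_pow hprod hs.card_ne_zero).symm
    _ ≤ ((∑ i ∈ s, x i) / #s) ^ #s := pow_le_pow_left₀ (Real.rpow_nonneg hprod _) amgm _

lemma sum_sqrt_le_card_mul_sqrt_mean (s : Finset ι) (hx : ∀ i ∈ s, 0 ≤ x i) :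
    ∑ i ∈ s, √(x i) ≤ #s * √((∑ i ∈ s, x i) / #s) := by
  rcases s.eq_empty_or_nonempty with rfl | hs
  · simp
  have hcard : (0 : ℝ) < #s := by exact_mod_cast hs.card_pos
  refine le_of_sq_le_sq ?_ (by positivity)
  calc (∑ i ∈ s, √(x i)) ^ 2 ≤ #s * ∑ i ∈ s, √(x i) ^ 2 := sq_sum_le_card_mul_sum_sq
    _ = #s * ∑ i ∈ s, x i := by
      rw [sum_congr rfl fun i hi => Real.sq_sqrt (hx i hi)]
    _ = (#s * √((∑ i ∈ s, x i) / #s)) ^ 2 := by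
      rw [mul_pow, Real.sq_sqrt (div_nonneg (sum_nonneg hx) hcard.le)]
      field_simp

lemma mean_mem_Ico {d : ℕ} {u : Fin d → ℝ} (hu : ∀ j, u j ∈ Set.Ico (0 : ℝ) 1) :
    (∑ j, u j) / d ∈ Set.Ico (0 : ℝ) 1 := by
  refine ⟨div_nonneg (sum_nonneg fun j _ => (hu j).1) d.cast_nonneg, ?_⟩
  rcases d.eq_zero_or_pos with rfl | hd
  · simp
  have : Nonempty (Fin d) := Fin.pos_iff_nonempty.1 hd
  rw [div_lt_one (by exact_mod_cast hd)]
  simpa using sum_lt_sum_of_nonempty univ_nonempty fun j _ => (hu j).2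

lemma add_one_mul_mul_pow_le {a p : ℝ} (ha : 0 ≤ a) (hp : 0 < p) (n : ℕ) :
    (n + 1) * a * p ^ n ≤ n * p ^ (n + 1) + a ^ (n + 1) := by
  have hap : -1 ≤ a / p := by linarith [div_nonneg ha hp.le]
  have bernoulli : 1 + (n + 1) * (a / p - 1) ≤ (a / p) ^ (n + 1) := by
    simpa using one_add_mul_sub_le_pow hap (n + 1)
  calc (n + 1) * a * p ^ n = n * p ^ (n + 1) + (1 + (n + 1) * (a / p - 1)) * p ^ (n + 1) := by
        field_simp
        ring
    _ ≤ n * p ^ (n + 1) + (a / p) ^ (n + 1) * p ^ (n + 1) := by gcongr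
    _ = n * p ^ (n + 1) + a ^ (n + 1) := by rw [← mul_pow, div_mul_cancel₀ a hp.ne']

end Means

lemma amort_pos (w : ℕ) : 0 < amort w := zpow_pos (by norm_num) _

lemma amort_eq_of_le_three {w : ℕ} (h1 : 1 ≤ w) (h3 : w ≤ 3) : amort w = (0.981 : ℝ)⁻¹ := by
  have hclog : Nat.clog 4 (w + 1) = 1 := by interval_cases w <;> norm_num
  simp [amort, hclog]

lemma amort_one : amort 1 = (0.981 : ℝ)⁻¹ := amort_eq_of_le_three le_rfl (by norm_num)

lemma amort_succ_le (w : ℕ) : amort (w + 1) ≤ (0.981 : ℝ)⁻¹ * amort w := by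
  have hclog : Nat.clog 4 (w + 1 + 1) ≤ Nat.clog 4 (w + 1) + 1 := by
    refine Nat.clog_le_of_le_pow ?_
    have := Nat.le_pow_clog (b := 4) (by norm_num) (w + 1)
    rw [pow_succ]
    lia
  simp only [amort, zpow_neg, zpow_natCast, ← inv_pow]
  rw [← pow_succ']
  exact pow_le_pow_right₀ (by norm_num) hclog

lemma sqrt_two_pow_sq (n : ℕ) : (√2 ^ n) ^ 2 = (2 : ℝ) ^ n := by
  rw [← pow_mul, mul_comm, pow_mul, Real.sq_sqrt zero_le_two]

lemma natCast_mul_amort_succ_le {n : ℕ} (hn : 3 ≤ n) :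
    n * amort (n + 1) ≤ 7 / 8 * √2 ^ (n + 1) * amort 1 := by
  induction n, hn using Nat.le_induction with
  | base =>
    have hsqrt : √2 ^ (3 + 1) = (4 : ℝ) := by
      rw [show 3 + 1 = 2 * 2 from rfl, pow_mul, sqrt_two_pow_sq]
      norm_num
    have hamort : amort (3 + 1) ≤ (0.981)⁻¹ * amort 1 := by
      simpa only [amort_one, amort_eq_of_le_three (Nat.le_add_left 1 2) le_rfl]
        using amort_succ_le 3
    rw [hsqrt]
    norm_num at hamort ⊢
    linarith [amort_pos 1]
  | succ n hn ih =>
    have hn' : (3 : ℝ) ≤ n := by exact_mod_cast hn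
    have hsqrt : 1.4 ≤ √(2 : ℝ) := Real.le_sqrt_of_sq_le (by norm_num)
    have growth : ((n : ℝ) + 1) * (0.981)⁻¹ ≤ √2 * n := by
      rw [← div_eq_mul_inv, div_le_iff₀ (by norm_num)]
      nlinarith
    push_cast
    calc ((n : ℝ) + 1) * amort (n + 1 + 1)
        ≤ (n + 1) * ((0.981)⁻¹ * amort (n + 1)) := by gcongr; exact amort_succ_le _
      _ = ((n + 1) * (0.981)⁻¹) * amort (n + 1) := by ring
      _ ≤ (√2 * n) * amort (n + 1) := by gcongr; exact (amort_pos _).le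
      _ = √2 * (n * amort (n + 1)) := by ring
      _ ≤ √2 * (7 / 8 * √2 ^ (n + 1) * amort 1) := by gcongr
      _ = 7 / 8 * √2 ^ (n + 1 + 1) * amort 1 := by ring

lemma Tfun_one {t : ℝ} (ht : t ≠ 1) : Tfun t 1 = √t := by
  have : 1 - t ≠ 0 := sub_ne_zero.2 ht.symm
  calc Tfun t 1 = t / (1 - t) * ((1 - t) / √t) := by simp [Tfun]
    _ = t / √t := by field_simp
    _ = √t := Real.div_sqrt

lemma Tfun_succ {t : ℝ} {n : ℕ} (h0 : 0 < t) (ht : t < 2 ^ n) :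
    Tfun t (n + 1) = √(t / 2 ^ n) * (√2 ^ n * (1 - t + n * √t / √2) / (2 ^ n - t)) := by
  have hden : (2 : ℝ) ^ n - t ≠ 0 := (sub_pos.2 ht).ne'
  have : 0 < √t := Real.sqrt_pos.2 h0
  have hsqrt : √(t / 2 ^ n) = √t / √2 ^ n := by
    rw [Real.sqrt_div h0.le, ← sqrt_two_pow_sq, Real.sqrt_sq (by positivity)]
  have hx : t / 2 ^ n / (1 - t / 2 ^ n) = t / (2 ^ n - t) := by
    field_simp
  calc Tfun t (n + 1) = t / (2 ^ n - t) * ((1 - t) / √t + n / √2) := by simp [Tfun, hx]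
    _ = √t ^ 2 / (2 ^ n - t) * ((1 - t) / √t + n / √2) := by rw [Real.sq_sqrt h0.le]
    _ = √(t / 2 ^ n) * (√2 ^ n * (1 - t + n * √t / √2) / (2 ^ n - t)) := by
      rw [hsqrt]
      field_simp

section Ratio

variable {t : ℝ} {n : ℕ}

lemma sqrt_two_pow_mul_le_of_le_two (h0 : 0 ≤ t) (h1 : t ≤ 1) (hn : n ≤ 2) :
    √2 ^ n * (1 - t + n * √t / √2) ≤ 2 ^ n - t := by
  have hs : √t ^ 2 = t := Real.sq_sqrt h0
  have hs1 : √t ≤ 1 := Real.sqrt_le_one.2 h1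
  have hr : √2 ^ 2 = (2 : ℝ) := Real.sq_sqrt zero_le_two
  have hr1 : 1 < √2 := Real.one_lt_sqrt_two
  rw [← sub_nonneg]
  interval_cases n
  · simp
  · calc 0 ≤ (1 - √t) * (√2 - 1) * (√2 - √t) :=
          mul_nonneg (mul_nonneg (by linarith) (by linarith)) (by linarith)
      _ = 2 ^ 1 - t - √2 ^ 1 * (1 - t + (1 : ℕ) * √t / √2) := by
        field_simp
        push_cast
        linear_combination (1 - √t) * hr + (√2 - 1) * hs
  · calc 0 ≤ (√2 - √t) ^ 2 := sq_nonneg _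
      _ = 2 ^ 2 - t - √2 ^ 2 * (1 - t + (2 : ℕ) * √t / √2) := by
        field_simp
        push_cast
        linear_combination (2 - t) * hr + hs

lemma one_sub_add_mul_sqrt_le {c : ℝ} (h0 : 0 ≤ t) (h1 : t ≤ 1) (hc : 2 ≤ c) :
    1 - t + c * √t ≤ c := by
  have hs1 : √t ≤ 1 := Real.sqrt_le_one.2 h1
  have : (1 - √t) * (1 + √t) ≤ (1 - √t) * c := by
    exact mul_le_mul_of_nonneg_left (by linarith) (sub_nonneg.2 hs1)
  linarith [Real.sq_sqrt h0]

lemma sqrt_two_pow_mul_amort_le_of_three_le (h0 : 0 ≤ t) (h1 : t ≤ 1) (hn : 3 ≤ n) :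
    √2 ^ n * (1 - t + n * √t / √2) * amort (n + 1) ≤ (2 ^ n - t) * amort 1 := by
  have hslope : 2 ≤ n / √2 := by
    rw [le_div_iff₀ (by positivity)]
    have : (3 : ℝ) ≤ n := by exact_mod_cast hn
    linarith [Real.sqrt_two_lt_three_halves]
  have hpow : (2 : ℝ) ^ 3 ≤ 2 ^ n := pow_le_pow_right₀ one_le_two hn
  calc √2 ^ n * (1 - t + n * √t / √2) * amort (n + 1)
      = √2 ^ n * (1 - t + n / √2 * √t) * amort (n + 1) := by ring
    _ ≤ √2 ^ n * (n / √2) * amort (n + 1) := by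
      gcongr
      · exact (amort_pos _).le
      · exact one_sub_add_mul_sqrt_le h0 h1 hslope
    _ = √2 ^ n / √2 * (n * amort (n + 1)) := by ring
    _ ≤ √2 ^ n / √2 * (7 / 8 * √2 ^ (n + 1) * amort 1) := by
      exact mul_le_mul_of_nonneg_left (natCast_mul_amort_succ_le hn) (by positivity)
    _ = 7 / 8 * (√2 ^ n) ^ 2 * amort 1 := by
      rw [pow_succ √2 n]
      field_simp
    _ = 7 / 8 * 2 ^ n * amort 1 := by rw [sqrt_two_pow_sq]
    _ ≤ (2 ^ n - t) * amort 1 := by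
      gcongr
      · exact (amort_pos _).le
      · linarith

end Ratio

lemma div_two_pow_mem_Ioo {t : ℝ} (ht : t ∈ Set.Ioo (0 : ℝ) 1) (n : ℕ) :
    t / 2 ^ n ∈ Set.Ioo (0 : ℝ) 1 :=
  ⟨div_pos ht.1 (by positivity), (div_le_self ht.1.le (one_le_pow₀ one_le_two)).trans_lt ht.2⟩

lemma Tfun_mul_amort_le {t : ℝ} {w : ℕ} (hw : 1 ≤ w) (ht : t ∈ Set.Ioo (0 : ℝ) 1) :
    Tfun t w * amort w ≤ Tfun (t / 2 ^ (w - 1)) 1 * amort 1 := by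
  obtain ⟨n, rfl⟩ := Nat.exists_eq_add_of_le' hw
  have hpow : t < 2 ^ n := ht.2.trans_le (one_le_pow₀ one_le_two)
  have ratio_le : √2 ^ n * (1 - t + n * √t / √2) * amort (n + 1) ≤ (2 ^ n - t) * amort 1 := by
    rcases Nat.lt_or_ge n 3 with hn | hn
    · rw [amort_one, amort_eq_of_le_three hw (by lia)]
      gcongr
      exact sqrt_two_pow_mul_le_of_le_two ht.1.le ht.2.le (by lia)
    · exact sqrt_two_pow_mul_amort_le_of_three_le ht.1.le ht.2.le hn
  rw [Nat.add_sub_cancel, Tfun_one (div_two_pow_mem_Ioo ht n).2.ne, Tfun_succ ht.1 hpow, mul_assoc,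
    div_mul_eq_mul_div]
  gcongr
  exact (div_le_iff₀' (sub_pos.2 hpow)).2 ratio_le

lemma gfun_le_gfun {a b : ℝ} (ha : 0 ≤ a) (hab : a ≤ b) : gfun a ≤ gfun b := by
  refine Real.sqrt_le_sqrt ?_
  rw [div_le_div_iff₀ (by linarith) (by linarith)]
  linarith

section Kap

variable {d : ℕ}

lemma kap_le_kap_one {w : Fin d → ℕ} {t : Fin d → ℝ} (hw : ∀ j, 1 ≤ w j)
    (ht : ∀ j, t j ∈ Set.Ioo (0 : ℝ) 1) :
    kap d w t ≤ kap d 1 fun j => t j / 2 ^ (w j - 1) := by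
  simp only [kap, Pi.one_apply, Nat.sub_self, pow_zero, div_one]
  exact mul_le_mul_of_nonneg_left
    (sum_le_sum fun j _ => Tfun_mul_amort_le (hw j) (ht j)) (Real.sqrt_nonneg _)

lemma kap_one_eq {u : Fin d → ℝ} (hu : ∀ j, u j ≠ 1) :
    kap d 1 u = gfun (∏ j, (1 - u j)) * ((∑ j, √(u j)) * (0.981 : ℝ)⁻¹) := by
  simp only [kap, Pi.one_apply, Nat.sub_self, pow_zero, div_one, Tfun_one (hu _), amort_one,
    sum_mul]

lemma kap_one_const {v : ℝ} (hv : v ≠ 1) :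
    kap d 1 (fun _ => v) = gfun ((1 - v) ^ d) * (d * √v * (0.981 : ℝ)⁻¹) := by
  simp [kap_one_eq fun _ => hv]

lemma kap_one_le_kap_one_mean {u : Fin d → ℝ} (hu : ∀ j, u j ∈ Set.Ico (0 : ℝ) 1) :
    kap d 1 u ≤ kap d 1 fun _ => (∑ j, u j) / d := by
  rcases d.eq_zero_or_pos with rfl | hd
  · simp [kap]
  have hd' : (d : ℝ) ≠ 0 := by exact_mod_cast hd.ne'
  have hprod : ∏ j, (1 - u j) ≤ (1 - (∑ j, u j) / d) ^ d := by
    simpa [sum_sub_distrib, sub_div, hd'] using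
      prod_le_mean_pow_card univ fun j _ => sub_nonneg.2 (hu j).2.le
  have hsum : ∑ j, √(u j) ≤ d * √((∑ j, u j) / d) := by
    simpa using sum_sqrt_le_card_mul_sqrt_mean univ fun j _ => (hu j).1
  rw [kap_one_eq fun j => (hu j).2.ne, kap_one_const (mean_mem_Ico hu).2.ne]
  gcongr
  · exact Real.sqrt_nonneg _
  · exact gfun_le_gfun (prod_nonneg fun j _ => sub_nonneg.2 (hu j).2.le) hprod

variable {v B : ℝ}

lemma kap_one_const_lt (hv : v ∈ Set.Ico (0 : ℝ) 1) (hB : 0 < B)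
    (h : (d : ℝ) ^ 2 * v * (1 - v) ^ d < (0.981 * B) ^ 2 * (1 + (1 - v) ^ d)) :
    kap d 1 (fun _ => v) < B := by
  obtain ⟨h0, h1⟩ := hv
  have : 0 < (1 - v) ^ d := pow_pos (sub_pos.2 h1) d
  rw [kap_one_const h1.ne, ← mul_assoc, ← div_eq_mul_inv, div_lt_iff₀' (by norm_num)]
  refine lt_of_pow_lt_pow_left₀ 2 (by positivity) ?_
  calc (gfun ((1 - v) ^ d) * (d * √v)) ^ 2
      = (1 - v) ^ d / (1 + (1 - v) ^ d) * (d ^ 2 * v) := by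
        rw [gfun, mul_pow, mul_pow, Real.sq_sqrt (by positivity), Real.sq_sqrt h0]
    _ = d ^ 2 * v * (1 - v) ^ d / (1 + (1 - v) ^ d) := by ring
    _ < (0.981 * B) ^ 2 := (div_lt_iff₀ (by positivity)).2 h

-- With `p = 1 - v` and `K = (0.981 * B) ^ 2`, `a` is the critical point of
-- `(d ^ 2 - K) * p ^ d - d ^ 2 * p ^ (d + 1)`, whose value there is `d * a ^ (d + 1)`.
lemma kap_one_const_lt_of_critical {a : ℝ} (hv : v ∈ Set.Ico (0 : ℝ) 1) (hB : 0 < B) (ha : 0 ≤ a)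
    (hcrit : d * (d + 1) * a = d ^ 2 - (0.981 * B) ^ 2)
    (hmax : d * a ^ (d + 1) < (0.981 * B) ^ 2) :
    kap d 1 (fun _ => v) < B := by
  refine kap_one_const_lt hv hB ?_
  have young := mul_le_mul_of_nonneg_left
    (add_one_mul_mul_pow_le ha (sub_pos.2 hv.2) d) (Nat.cast_nonneg (α := ℝ) d)
  calc (d : ℝ) ^ 2 * v * (1 - v) ^ d
      = d * ((d + 1) * a * (1 - v) ^ d) - d * (d * (1 - v) ^ (d + 1))
          + (0.981 * B) ^ 2 * (1 - v) ^ d := by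
        linear_combination -(1 - v) ^ d * hcrit
    _ ≤ d * a ^ (d + 1) + (0.981 * B) ^ 2 * (1 - v) ^ d := by linarith
    _ < (0.981 * B) ^ 2 * (1 + (1 - v) ^ d) := by linarith

lemma kap_one_one_const_lt (hv : v ∈ Set.Icc (0 : ℝ) (1 / 2)) : kap 1 1 (fun _ => v) < 0.42 := by
  refine kap_one_const_lt ⟨hv.1, by linarith [hv.2]⟩ (by norm_num) ?_
  norm_num
  nlinarith [sq_nonneg (1 / 2 - v), hv.2]

end Kap

theorem stmt8_general (d : ℕ) (w : Fin d → ℕ) (hw : ∀ j, 1 ≤ w j)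
    (t : Fin d → ℝ) (ht : ∀ j, t j ∈ Set.Ioo (0 : ℝ) 1) :
    (d = 4 → kap d w t < 1) ∧
    (d = 3 → kap d w t < 0.85) ∧
    (d = 2 → kap d w t < 0.67) ∧
    (d = 1 → (∀ j, t j ≤ 1 / 2) → kap d w t < 0.42) := by
  have hu j : t j / 2 ^ (w j - 1) ∈ Set.Ico (0 : ℝ) 1 :=
    Set.Ioo_subset_Ico_self (div_two_pow_mem_Ioo (ht j) _)
  have hmean := mean_mem_Ico hu
  have hkap := (kap_le_kap_one hw ht).trans (kap_one_le_kap_one_mean hu)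
  refine ⟨?_, ?_, ?_, ?_⟩ <;> rintro rfl
  · exact hkap.trans_lt <| kap_one_const_lt_of_critical (a := (4 ^ 2 - 0.981 ^ 2) / 20) hmean
      (by norm_num) (by norm_num) (by norm_num) (by norm_num)
  · exact hkap.trans_lt <| kap_one_const_lt_of_critical (a := (3 ^ 2 - (0.981 * 0.85) ^ 2) / 12)
      hmean (by norm_num) (by norm_num) (by norm_num) (by norm_num)
  · exact hkap.trans_lt <| kap_one_const_lt_of_critical (a := (2 ^ 2 - (0.981 * 0.67) ^ 2) / 6)
      hmean (by norm_num) (by norm_num) (by norm_num) (by norm_num)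
  · intro hhalf
    refine hkap.trans_lt <| kap_one_one_const_lt ⟨hmean.1, ?_⟩
    simpa using (div_le_self (ht 0).1.le (one_le_pow₀ one_le_two)).trans (hhalf 0)

/-- numerical bounds for small group sizes: for `1 ≤ w_j ≤ 3` and
`t ∈ (0,1/2]^d`: `κ_4 < 1`, `κ_3 < 0.85`, `κ_2 < 0.67`, `κ_1 < 0.42`. -/
theorem stmt8 (d : ℕ) (w : Fin d → ℕ) (hw : ∀ j, 1 ≤ w j ∧ w j ≤ 3)
    (t : Fin d → ℝ) (ht : ∀ j, t j ∈ Set.Ioc (0 : ℝ) (1 / 2)) :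
    (d = 4 → kap d w t < 1) ∧
    (d = 3 → kap d w t < 0.85) ∧
    (d = 2 → kap d w t < 0.67) ∧
    (d = 1 → kap d w t < 0.42) := by
  obtain ⟨h4, h3, h2, h1⟩ := stmt8_general d w (fun j => (hw j).1) t fun j =>
    ⟨(ht j).1, (ht j).2.trans_lt one_half_lt_one⟩
  exact ⟨h4, h3, h2, fun hd => h1 hd fun j => (ht j).2⟩
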